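/- Let x, y, z, t, ω ∈ ℂ with y ≠ 0, max{|yt|, |yω|} < 1, and x ω q^m ≠ 1 and z ω q^m ≠ 1 for all integers m ≥ 0. Then the double series ∑_{n=0}^∞ ∑_{m=0}^∞ F_{n+m}(x,y,z;q) (−1)^{n+m} q^{C(n+m,2)} (t^n/(q;q)_n)(ω^m/(q;q)_m) converges absolutely and its sum equals ((xω;q)_∞ (zω;q)_∞ / (yω;q)_∞) · ∑_{j=0}^∞ (−1)^j q^{C(j,2)} ((yω;q)_j (zt)^j / ((xω;q)_j (zω;q)_j (q;q)_j)) · ₂Φ₁[x/y, 0; xω q^j; q; yt]. -/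

import Mathlib

noncomputable section

/-- The q-shifted factorial `(a;q)_n`. -/
def qPoch (q a : ℂ) (n : ℕ) : ℂ := ∏ j ∈ Finset.range n, (1 - a * q ^ j)

/-- The infinite q-shifted factorial `(a;q)_∞`. -/
def qPochInf (q a : ℂ) : ℂ := ∏' j : ℕ, (1 - a * q ^ j)

/-- The q-binomial coefficient `[n k]_q`. -/
def qBinom (q : ℂ) (n k : ℕ) : ℂ := qPoch q q n / (qPoch q q k * qPoch q q (n - k))

/-- The Cauchy polynomials `p_n(x,y)`. -/
def cauchyP (q x y : ℂ) (n : ℕ) : ℂ := ∏ j ∈ Finset.range n, (x - q ^ j * y)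

/-- The generalized q-binomial coefficient `[α k]_{-q}`. -/
def genQBinom (q α : ℂ) (k : ℕ) : ℂ :=
  qPoch q (-(q ^ (-α))) k / qPoch q (-q) k * q ^ (α * (k : ℂ) - (k.choose 2 : ℂ))

/-- The generalized q-polynomials `L̃_n^{(r,s)}(α,x,y,z,a)`. -/
def Ltil (q : ℂ) (r s : ℤ) (α x y z a : ℂ) (n : ℕ) : ℂ :=
  ∑ k ∈ Finset.range (n + 1),
    qBinom q n k * genQBinom q α k *
      q ^ (r * (k.choose 2 : ℤ) - s * ((k + 1).choose 2 : ℤ) + (k.choose 2 : ℤ)) *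
      qPoch q a k * cauchyP q x y (n - k) * z ^ k

/-- The basic hypergeometric series `₂Φ₁[a,b;c;q;z]`. -/
def Phi21 (q a b c z : ℂ) : ℂ :=
  ∑' n : ℕ, qPoch q a n * qPoch q b n / (qPoch q c n * qPoch q q n) * z ^ n

/-- The basic hypergeometric series `₄Φ₃`. -/
def Phi43 (q a₁ a₂ a₃ a₄ b₁ b₂ b₃ z : ℂ) : ℂ :=
  ∑' n : ℕ, qPoch q a₁ n * qPoch q a₂ n * qPoch q a₃ n * qPoch q a₄ n /
    (qPoch q b₁ n * qPoch q b₂ n * qPoch q b₃ n * qPoch q q n) * z ^ n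

/-- The trivariate q-polynomials `F_n(x,y,z;q)`. -/
def Ftri (q x y z : ℂ) (n : ℕ) : ℂ :=
  (-1) ^ n * q ^ (-(n.choose 2 : ℤ)) *
    ∑ k ∈ Finset.range (n + 1),
      qBinom q n k * q ^ (k.choose 2) * (-z) ^ k * cauchyP q y x (n - k)

/-- The Hahn (Al-Salam–Carlitz) polynomials `φ_n^{(σ)}(x|q)`. -/
def hahnPhi (q σ x : ℂ) (n : ℕ) : ℂ :=
  ∑ k ∈ Finset.range (n + 1), qBinom q n k * qPoch q σ k * x ^ k

/-- The q-derivative operator `D_a`. -/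
def Dq (q : ℂ) (f : ℂ → ℂ) : ℂ → ℂ := fun a => (f a - f (q * a)) / a

/-- The homogeneous q-difference operator `D_{xy}`. -/
def Dxy (q : ℂ) (f : ℂ → ℂ → ℂ) : ℂ → ℂ → ℂ :=
  fun x y => (f x (y / q) - f (q * x) y) / (x - y / q)

/-!
Up to sign and a power of `q`, `F_n` is the `q`-binomial convolution of the Cauchy polynomials
`p_k(0, z)` and `p_l(y, x)`. The `q`-Vandermonde identity, `p_{m+n}(x, y) = p_m(x, y) p_n(x, q^m y)`
and the homogeneity of `p_n` express the convolution at `n + m` through convolutions at `m` with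
rescaled parameters. Each of these has an explicit generating function in `m`, since the
`q`-binomial theorem sums `∑ p_n(x, y) s^n / (q; q)_n` to `(y s; q)_∞ / (x s; q)_∞`. Hence summing
over `m` first leaves, for each `n`, a finite sum over `i + l = n`, and the double series becomes
the series over all pairs `(i, l)`.
-/

section Rogers

open Filter Topology Finset

variable {q : ℂ}

lemma norm_mul_pow_lt_one (hq : ‖q‖ < 1) {a : ℂ} (ha : ‖a‖ < 1) (n : ℕ) : ‖a * q ^ n‖ < 1 := by
  rw [norm_mul, norm_pow]
  exact mul_lt_one_of_nonneg_of_lt_one_left (norm_nonneg _) ha (pow_le_one₀ (norm_nonneg _) hq.le)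

lemma mul_pow_ne_one (hq : ‖q‖ < 1) {a : ℂ} (ha : ‖a‖ < 1) (n : ℕ) : a * q ^ n ≠ 1 :=
  fun h => (norm_mul_pow_lt_one hq ha n).ne (by rw [h, norm_one])

lemma qPoch_succ (q a : ℂ) (n : ℕ) : qPoch q a (n + 1) = qPoch q a n * (1 - a * q ^ n) :=
  Finset.prod_range_succ _ _

lemma qPoch_add (q a : ℂ) (m n : ℕ) :
    qPoch q a (m + n) = qPoch q a m * qPoch q (a * q ^ m) n := by
  simp only [qPoch, Finset.prod_range_add, pow_add, mul_assoc]

lemma qPoch_ne_zero {a : ℂ} (ha : ∀ m : ℕ, a * q ^ m ≠ 1) (n : ℕ) : qPoch q a n ≠ 0 :=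
  Finset.prod_ne_zero_iff.mpr fun m _ => sub_ne_zero.mpr (ha m).symm

lemma qPoch_self_ne_zero (hq : ‖q‖ < 1) (n : ℕ) : qPoch q q n ≠ 0 :=
  qPoch_ne_zero (mul_pow_ne_one hq hq) n

lemma summable_norm_neg_mul_pow (hq : ‖q‖ < 1) (a : ℂ) :
    Summable fun j : ℕ => ‖-(a * q ^ j)‖ := by
  simp only [norm_neg, norm_mul, norm_pow]
  exact (summable_geometric_of_lt_one (norm_nonneg _) hq).mul_left _

lemma qPochInf_eq_tprod_one_add (q a : ℂ) : qPochInf q a = ∏' j : ℕ, (1 + -(a * q ^ j)) := by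
  simp only [qPochInf, sub_eq_add_neg]

@[simp]
lemma qPochInf_zero (q : ℂ) : qPochInf q 0 = 1 := by
  simp [qPochInf]

lemma tendsto_qPoch (hq : ‖q‖ < 1) (a : ℂ) : Tendsto (qPoch q a) atTop (𝓝 (qPochInf q a)) := by
  have h : Multipliable fun j : ℕ => 1 - a * q ^ j := by
    simpa only [← sub_eq_add_neg] using
      multipliable_one_add_of_summable (summable_norm_neg_mul_pow hq a)
  exact h.tendsto_prod_tprod_nat

lemma qPochInf_ne_zero (hq : ‖q‖ < 1) {a : ℂ} (ha : ‖a‖ < 1) : qPochInf q a ≠ 0 := by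
  rw [qPochInf_eq_tprod_one_add]
  refine tprod_one_add_ne_zero_of_summable (fun j => ?_) (summable_norm_neg_mul_pow hq a)
  rw [← sub_eq_add_neg]
  exact sub_ne_zero.mpr (mul_pow_ne_one hq ha j).symm

lemma qPoch_mul_qPochInf (hq : ‖q‖ < 1) (a : ℂ) (n : ℕ) :
    qPoch q a n * qPochInf q (a * q ^ n) = qPochInf q a := by
  have h := (tendsto_qPoch hq a).comp (tendsto_add_atTop_nat n)
  refine tendsto_nhds_unique ((tendsto_qPoch hq (a * q ^ n)).const_mul _) (h.congr fun m => ?_)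
  rw [Function.comp_apply, add_comm, qPoch_add]

lemma qPochInf_mul_pow (hq : ‖q‖ < 1) {a : ℂ} {n : ℕ} (ha : qPoch q a n ≠ 0) :
    qPochInf q (a * q ^ n) = qPochInf q a / qPoch q a n := by
  rw [← qPoch_mul_qPochInf hq a n, mul_div_cancel_left₀ _ ha]

lemma tendsto_mul_pow_zero (hq : ‖q‖ < 1) (a : ℂ) :
    Tendsto (fun n : ℕ => a * q ^ n) atTop (𝓝 0) := by
  simpa only [mul_zero] using (tendsto_pow_atTop_nhds_zero_of_norm_lt_one hq).const_mul a

lemma tendsto_qPochInf_mul_pow (hq : ‖q‖ < 1) (a : ℂ) :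
    Tendsto (fun n : ℕ => qPochInf q (a * q ^ n)) atTop (𝓝 1) := by
  rw [← qPochInf_zero q]
  simp only [qPochInf_eq_tprod_one_add]
  refine tendsto_tprod_one_add_of_dominated_convergence (summable_norm_neg_mul_pow hq a)
    (fun j => ((tendsto_mul_pow_zero hq a).mul_const _).neg) (.of_forall fun n j => ?_)
  rw [norm_neg, norm_neg, mul_right_comm, norm_mul, norm_pow]
  exact mul_le_of_le_one_right (norm_nonneg _) (pow_le_one₀ (norm_nonneg _) hq.le)

lemma cauchyP_succ (q x y : ℂ) (n : ℕ) :
    cauchyP q x y (n + 1) = cauchyP q x y n * (x - q ^ n * y) :=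
  Finset.prod_range_succ _ _

lemma cauchyP_add (q x y : ℂ) (m n : ℕ) :
    cauchyP q x y (m + n) = cauchyP q x y m * cauchyP q x (q ^ m * y) n := by
  simp only [cauchyP, Finset.prod_range_add, pow_add, mul_assoc, mul_left_comm]

lemma cauchyP_mul_mul (q c x y : ℂ) (n : ℕ) :
    cauchyP q (c * x) (c * y) n = c ^ n * cauchyP q x y n := by
  simp only [cauchyP, mul_left_comm _ c, ← mul_sub, Finset.prod_mul_distrib, Finset.prod_const,
    Finset.card_range]

lemma cauchyP_zero_right (q x : ℂ) (n : ℕ) : cauchyP q x 0 n = x ^ n := by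
  simp [cauchyP]

lemma cauchyP_zero_left (q y : ℂ) (n : ℕ) : cauchyP q 0 y n = q ^ n.choose 2 * (-y) ^ n := by
  induction n with
  | zero => simp [cauchyP]
  | succ n ih =>
    rw [cauchyP_succ, ih, Nat.choose_succ_succ' n 1, Nat.choose_one_right]
    ring

lemma cauchyP_eq_pow_mul_qPoch (q : ℂ) {x : ℂ} (hx : x ≠ 0) (y : ℂ) (n : ℕ) :
    cauchyP q x y n = x ^ n * qPoch q (y / x) n := by
  calc cauchyP q x y n = cauchyP q (x * 1) (x * (y / x)) n := by rw [mul_one, mul_div_cancel₀ _ hx]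
    _ = x ^ n * cauchyP q 1 (y / x) n := cauchyP_mul_mul ..
    _ = x ^ n * qPoch q (y / x) n := by simp only [cauchyP, qPoch, mul_comm]

/-- The generating function `∑ p_n(x,y) sⁿ / (q;q)_n` of the Cauchy polynomials, evaluated
in closed form by `cauchySeries_eq`. -/
def cauchySeries (q x y s : ℂ) : ℂ := ∑' n : ℕ, cauchyP q x y n / qPoch q q n * s ^ n

lemma cauchyP_div_qPoch_succ (q x y : ℂ) (n : ℕ) :
    cauchyP q x y (n + 1) / qPoch q q (n + 1) =
      (x - q ^ n * y) / (1 - q * q ^ n) * (cauchyP q x y n / qPoch q q n) := by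
  rw [cauchyP_succ, qPoch_succ, mul_div_mul_comm, mul_comm]

lemma summable_norm_cauchyP (hq : ‖q‖ < 1) {x s : ℂ} (hs : ‖x * s‖ < 1) (y : ℂ) :
    Summable fun n : ℕ => ‖cauchyP q x y n / qPoch q q n * s ^ n‖ := by
  have ratio_tendsto : Tendsto (fun n : ℕ => ‖(x - q ^ n * y) / (1 - q * q ^ n) * s‖) atTop
      (𝓝 ‖x * s‖) := by
    have hnum : Tendsto (fun n : ℕ => x - q ^ n * y) atTop (𝓝 x) := by
      simpa only [mul_comm, sub_zero] using (tendsto_mul_pow_zero hq y).const_sub x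
    have hden : Tendsto (fun n : ℕ => 1 - q * q ^ n) atTop (𝓝 1) := by
      simpa only [sub_zero] using (tendsto_mul_pow_zero hq q).const_sub 1
    simpa only [div_one, Pi.div_apply] using ((hnum.div hden one_ne_zero).mul_const s).norm
  obtain ⟨r, hsr, hr⟩ := exists_between hs
  refine summable_of_ratio_norm_eventually_le hr ?_
  filter_upwards [ratio_tendsto.eventually_le_const hsr] with n hn
  calc ‖‖cauchyP q x y (n + 1) / qPoch q q (n + 1) * s ^ (n + 1)‖‖
      = ‖(x - q ^ n * y) / (1 - q * q ^ n) * s‖ * ‖cauchyP q x y n / qPoch q q n * s ^ n‖ := by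
        rw [norm_norm, cauchyP_div_qPoch_succ, ← norm_mul]
        ring_nf
    _ ≤ r * ‖‖cauchyP q x y n / qPoch q q n * s ^ n‖‖ := by
        rw [norm_norm]
        gcongr

lemma one_sub_mul_cauchySeries (hq : ‖q‖ < 1) {x s : ℂ} (hs : ‖x * s‖ < 1) (y : ℂ) :
    (1 - x * s) * cauchySeries q x y s = (1 - y * s) * cauchySeries q x y (s * q) := by
  set c : ℕ → ℂ := fun n => cauchyP q x y n / qPoch q q n
  have hsum : Summable fun n => c n * s ^ n := (summable_norm_cauchyP hq hs y).of_norm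
  have hsum_q : Summable fun n => c n * (s * q) ^ n := by
    refine (summable_norm_cauchyP hq ?_ y).of_norm
    simpa only [pow_one, mul_assoc] using norm_mul_pow_lt_one hq hs 1
  have coeff_eq (n : ℕ) : c (n + 1) * s ^ (n + 1) - c (n + 1) * (s * q) ^ (n + 1) =
      x * s * (c n * s ^ n) - y * s * (c n * (s * q) ^ n) := by
    have hn : 1 - q * q ^ n ≠ 0 := sub_ne_zero.mpr (mul_pow_ne_one hq hq n).symm
    have hc : c (n + 1) * (1 - q * q ^ n) = (x - q ^ n * y) * c n := by
      simp only [c]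
      rw [cauchyP_div_qPoch_succ, mul_right_comm, div_mul_cancel₀ _ hn]
    simp only [mul_pow, pow_succ]
    linear_combination s ^ n * s * hc
  have difference : cauchySeries q x y s - cauchySeries q x y (s * q) =
      x * s * cauchySeries q x y s - y * s * cauchySeries q x y (s * q) := by
    unfold cauchySeries
    rw [← hsum.tsum_sub hsum_q, (hsum.sub hsum_q).tsum_eq_zero_add, pow_zero, pow_zero, sub_self,
      zero_add, ← tsum_mul_left, ← tsum_mul_left,
      ← (hsum.mul_left _).tsum_sub (hsum_q.mul_left _)]
    exact tsum_congr coeff_eq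
  linear_combination difference

lemma qPoch_mul_cauchySeries (hq : ‖q‖ < 1) {x s : ℂ} (hs : ‖x * s‖ < 1) (y : ℂ) (n : ℕ) :
    qPoch q (x * s) n * cauchySeries q x y s =
      qPoch q (y * s) n * cauchySeries q x y (s * q ^ n) := by
  induction n with
  | zero => simp [qPoch]
  | succ n ih =>
    have hn : ‖x * (s * q ^ n)‖ < 1 := by
      simpa only [mul_assoc] using norm_mul_pow_lt_one hq hs n
    have step := one_sub_mul_cauchySeries hq hn y
    rw [qPoch_succ, qPoch_succ, pow_succ, ← mul_assoc s]
    linear_combination (1 - x * s * q ^ n) * ih + qPoch q (y * s) n * step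

lemma tendsto_cauchySeries_mul_pow (hq : ‖q‖ < 1) {x s : ℂ} (hs : ‖x * s‖ < 1) (y : ℂ) :
    Tendsto (fun n : ℕ => cauchySeries q x y (s * q ^ n)) atTop (𝓝 1) := by
  have at_zero : cauchySeries q x y 0 = 1 := by
    rw [cauchySeries, tsum_eq_single 0 fun n hn => by simp [hn]]
    simp [cauchyP, qPoch]
  rw [← at_zero]
  refine tendsto_tsum_of_dominated_convergence (summable_norm_cauchyP hq hs y)
    (fun k => ((tendsto_mul_pow_zero hq s).pow k).const_mul _) (.of_forall fun n k => ?_)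
  rw [norm_mul, norm_mul, norm_pow, norm_pow]
  gcongr
  rw [norm_mul, norm_pow]
  exact mul_le_of_le_one_right (norm_nonneg _) (pow_le_one₀ (norm_nonneg _) hq.le)

theorem cauchySeries_eq (hq : ‖q‖ < 1) {x s : ℂ} (hs : ‖x * s‖ < 1) (y : ℂ) :
    cauchySeries q x y s = qPochInf q (y * s) / qPochInf q (x * s) := by
  rw [eq_div_iff (qPochInf_ne_zero hq hs), mul_comm]
  have lhs_tendsto := (tendsto_qPoch hq (x * s)).mul_const (cauchySeries q x y s)
  have rhs_tendsto := (tendsto_qPoch hq (y * s)).mul (tendsto_cauchySeries_mul_pow hq hs y)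
  rw [mul_one] at rhs_tendsto
  exact tendsto_nhds_unique lhs_tendsto
    (rhs_tendsto.congr fun n => (qPoch_mul_cauchySeries hq hs y n).symm)

lemma qBinom_of_mem_antidiagonal (q : ℂ) {n : ℕ} {p : ℕ × ℕ} (hp : p ∈ antidiagonal n) :
    qBinom q n p.1 = qPoch q q n / (qPoch q q p.1 * qPoch q q p.2) := by
  rw [qBinom, ← mem_antidiagonal.mp hp, Nat.add_sub_cancel_left]

lemma sum_qBinom_succ (hq : ∀ n, qPoch q q n ≠ 0) (n : ℕ) (f : ℕ → ℕ → ℂ) :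
    ∑ p ∈ antidiagonal (n + 1), qBinom q (n + 1) p.1 * f p.1 p.2 =
      ∑ p ∈ antidiagonal n, qBinom q n p.1 * (q ^ p.2 * f (p.1 + 1) p.2 + f p.1 (p.2 + 1)) := by
  have factor_ne (k : ℕ) : 1 - q * q ^ k ≠ 0 := right_ne_zero_of_mul (qPoch_succ q q k ▸ hq (k + 1))
  let g : ℕ × ℕ → ℂ := fun p => qPoch q q n / (qPoch q q p.1 * qPoch q q p.2) * f p.1 p.2
  have split : ∀ p ∈ antidiagonal (n + 1), qBinom q (n + 1) p.1 * f p.1 p.2 =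
      q ^ p.2 * (1 - q ^ p.1) * g p + (1 - q ^ p.2) * g p := fun p hp => by
    rw [qBinom_of_mem_antidiagonal q hp, qPoch_succ, ← pow_succ', ← mem_antidiagonal.mp hp, pow_add]
    ring
  rw [sum_congr rfl split, sum_add_distrib, Nat.sum_antidiagonal_succ,
    Nat.sum_antidiagonal_succ' (f := fun p => (1 - q ^ p.2) * g p)]
  simp only [pow_zero, sub_self, mul_zero, zero_mul, zero_add]
  rw [← sum_add_distrib]
  refine sum_congr rfl fun p hp => ?_
  have h₁ := factor_ne p.1
  have h₂ := factor_ne p.2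
  have h₃ := hq p.1
  have h₄ := hq p.2
  simp only [g, qBinom_of_mem_antidiagonal q hp, qPoch_succ, pow_succ']
  generalize 1 - q * q ^ p.1 = d₁ at *
  generalize 1 - q * q ^ p.2 = d₂ at *
  field_simp

theorem sum_qBinom_add (hq : ∀ n, qPoch q q n ≠ 0) (n m : ℕ) (f : ℕ → ℕ → ℂ) :
    ∑ p ∈ antidiagonal (n + m), qBinom q (n + m) p.1 * f p.1 p.2 =
      ∑ r ∈ antidiagonal n, qBinom q n r.1 *
        ∑ p ∈ antidiagonal m, qBinom q m p.1 * (q ^ (r.1 * p.2) * f (r.1 + p.1) (r.2 + p.2)) := by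
  induction n generalizing f with
  | zero => simp [qBinom, qPoch]
  | succ n ih =>
    rw [Nat.add_right_comm, sum_qBinom_succ hq,
      ih fun a b => q ^ b * f (a + 1) b + f a (b + 1),
      sum_qBinom_succ hq n fun i l =>
        ∑ p ∈ antidiagonal m, qBinom q m p.1 * (q ^ (i * p.2) * f (i + p.1) (l + p.2))]
    refine sum_congr rfl fun r _ => ?_
    congr 1
    rw [mul_sum, ← sum_add_distrib]
    refine sum_congr rfl fun p _ => ?_
    rw [Nat.add_right_comm r.1 1, Nat.add_right_comm r.2 1]
    ring

/-- The `q`-binomial convolution `∑ [n i]_q p_i(u,v) p_{n-i}(x,y)` of two families of Cauchy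
polynomials; with `u = 0` it is the sum in the definition of `F_n`. -/
def cauchyConv (q u v x y : ℂ) (n : ℕ) : ℂ :=
  ∑ p ∈ antidiagonal n, qBinom q n p.1 * (cauchyP q u v p.1 * cauchyP q x y p.2)

lemma cauchyConv_add (hq : ∀ n, qPoch q q n ≠ 0) (u v x y : ℂ) (n m : ℕ) :
    cauchyConv q u v x y (n + m) =
      ∑ r ∈ antidiagonal n, qBinom q n r.1 * (cauchyP q u v r.1 * cauchyP q x y r.2) *
        cauchyConv q u (q ^ r.1 * v) (q ^ r.1 * x) (q ^ n * y) m := by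
  rw [cauchyConv, sum_qBinom_add hq n m fun i l => cauchyP q u v i * cauchyP q x y l]
  refine sum_congr rfl fun r hr => ?_
  rw [cauchyConv, mul_assoc, mul_sum (a := _ * _)]
  congr 1
  refine sum_congr rfl fun p _ => ?_
  rw [← mem_antidiagonal.mp hr, pow_add, mul_assoc (q ^ r.1), cauchyP_mul_mul, cauchyP_add,
    cauchyP_add, pow_mul]
  ring

lemma hasSum_cauchyConv (hq : ‖q‖ < 1) {u x s : ℂ} (hu : ‖u * s‖ < 1) (hx : ‖x * s‖ < 1)
    (v y : ℂ) :
    HasSum (fun n => cauchyConv q u v x y n / qPoch q q n * s ^ n)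
      (qPochInf q (v * s) / qPochInf q (u * s) * (qPochInf q (y * s) / qPochInf q (x * s))) := by
  rw [← cauchySeries_eq hq hu, ← cauchySeries_eq hq hx]
  refine (hasSum_sum_range_mul_of_summable_norm (summable_norm_cauchyP hq hu v)
    (summable_norm_cauchyP hq hx y)).congr_fun fun n => ?_
  rw [← Nat.sum_antidiagonal_eq_sum_range_succ fun k l =>
    cauchyP q u v k / qPoch q q k * s ^ k * (cauchyP q x y l / qPoch q q l * s ^ l),
    cauchyConv, sum_div, sum_mul]
  refine sum_congr rfl fun p hp => ?_
  have hn := qPoch_self_ne_zero hq n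
  rw [qBinom_of_mem_antidiagonal q hp]
  nth_rw 3 [← mem_antidiagonal.mp hp]
  rw [pow_add]
  field_simp

lemma hasSum_cauchyConv_add (hq : ‖q‖ < 1) {u x s : ℂ} (hu : ‖u * s‖ < 1) (hx : ‖x * s‖ < 1)
    (v y : ℂ) (n : ℕ) :
    HasSum (fun m => cauchyConv q u v x y (n + m) / qPoch q q m * s ^ m)
      (∑ r ∈ antidiagonal n, qBinom q n r.1 * (cauchyP q u v r.1 * cauchyP q x y r.2) *
        (qPochInf q (v * s * q ^ r.1) / qPochInf q (u * s) *
          (qPochInf q (y * s * q ^ n) / qPochInf q (x * s * q ^ r.1)))) := by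
  have rescale (a : ℂ) (k : ℕ) : a * s * q ^ k = q ^ k * a * s := by ring
  simp only [cauchyConv_add (qPoch_self_ne_zero hq), sum_div, sum_mul, mul_div_assoc]
  refine hasSum_sum fun r _ => ?_
  have hx' : ‖q ^ r.1 * x * s‖ < 1 := rescale x r.1 ▸ norm_mul_pow_lt_one hq hx r.1
  simp only [rescale, mul_assoc (_ * _) (_ / _) (_ ^ _)]
  exact (hasSum_cauchyConv hq hu hx' _ _).mul_left _

lemma exists_norm_cauchyConv_mul_pow_le (hq : ‖q‖ < 1) {u x s : ℂ} (hu : ‖u * s‖ < 1)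
    (hx : ‖x * s‖ < 1) (v y : ℂ) : ∃ C : ℝ, ∀ n, ‖cauchyConv q u v x y n * s ^ n‖ ≤ C := by
  have h := (tendsto_qPoch hq q).mul (hasSum_cauchyConv hq hu hx v y).summable.tendsto_atTop_zero
  obtain ⟨C, hC⟩ := h.norm.bddAbove_range
  refine ⟨C, fun n => ?_⟩
  have hn := hC (Set.mem_range_self n)
  rwa [← mul_assoc, mul_div_cancel₀ _ (qPoch_self_ne_zero hq n)] at hn

lemma exists_gt_norm_mul_lt_one {K : Type*} [NormedField K] {a b s t : K} (has : ‖a * s‖ < 1)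
    (hat : ‖a * t‖ < 1) (hbs : ‖b * s‖ < 1) (hbt : ‖b * t‖ < 1) :
    ∃ r : ℝ, ‖s‖ < r ∧ ‖t‖ < r ∧ ‖a‖ * r < 1 ∧ ‖b‖ * r < 1 := by
  have near {c : K} (hs : ‖c * s‖ < 1) (ht : ‖c * t‖ < 1) :
      ∀ᶠ r in 𝓝[>] max ‖s‖ ‖t‖, ‖c‖ * r < 1 := by
    have hmax : ‖c‖ * max ‖s‖ ‖t‖ < 1 := by
      rw [mul_max_of_nonneg _ _ (norm_nonneg c), ← norm_mul, ← norm_mul]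
      exact max_lt hs ht
    exact (((continuous_const_mul ‖c‖).tendsto _).eventually_lt_const hmax).filter_mono
      nhdsWithin_le_nhds
  obtain ⟨r, hr, ha, hb⟩ :=
    (eventually_mem_nhdsWithin.and ((near has hat).and (near hbs hbt))).exists
  exact ⟨r, (le_max_left _ _).trans_lt hr, (le_max_right _ _).trans_lt hr, ha, hb⟩

theorem summable_norm_cauchyConv_add (hq : ‖q‖ < 1) {u x s t : ℂ} (hus : ‖u * s‖ < 1)
    (hut : ‖u * t‖ < 1) (hxs : ‖x * s‖ < 1) (hxt : ‖x * t‖ < 1) (v y : ℂ) :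
    Summable fun p : ℕ × ℕ => ‖cauchyConv q u v x y (p.1 + p.2) * (s ^ p.1 / qPoch q q p.1) *
      (t ^ p.2 / qPoch q q p.2)‖ := by
  obtain ⟨r, hsr, htr, hur, hxr⟩ := exists_gt_norm_mul_lt_one hus hut hxs hxt
  have hr : 0 < r := (norm_nonneg s).trans_lt hsr
  have hr' : (r : ℂ) ≠ 0 := Complex.ofReal_ne_zero.mpr hr.ne'
  have norm_r : ‖(r : ℂ)‖ = r := by rw [Complex.norm_real, Real.norm_of_nonneg hr.le]
  obtain ⟨C, hC⟩ := exists_norm_cauchyConv_mul_pow_le hq (u := u) (x := x) (s := r)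
    (by rwa [norm_mul, norm_r]) (by rwa [norm_mul, norm_r]) v y
  have geometric {w : ℂ} (hw : ‖w‖ < r) :
      Summable fun n => ‖cauchyP q (r : ℂ)⁻¹ 0 n / qPoch q q n * w ^ n‖ := by
    refine summable_norm_cauchyP hq ?_ 0
    rwa [norm_mul, norm_inv, norm_r, inv_mul_lt_one₀ hr]
  refine (((geometric hsr).mul_norm (geometric htr)).mul_left C).of_nonneg_of_le
    (fun _ => norm_nonneg _) fun p => ?_
  calc ‖cauchyConv q u v x y (p.1 + p.2) * (s ^ p.1 / qPoch q q p.1) * (t ^ p.2 / qPoch q q p.2)‖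
      = ‖cauchyConv q u v x y (p.1 + p.2) * (r : ℂ) ^ (p.1 + p.2)‖ *
          ‖cauchyP q (r : ℂ)⁻¹ 0 p.1 / qPoch q q p.1 * s ^ p.1 *
            (cauchyP q (r : ℂ)⁻¹ 0 p.2 / qPoch q q p.2 * t ^ p.2)‖ := by
        rw [← norm_mul, cauchyP_zero_right, cauchyP_zero_right, pow_add]
        simp only [inv_pow]
        field_simp
    _ ≤ C * ‖cauchyP q (r : ℂ)⁻¹ 0 p.1 / qPoch q q p.1 * s ^ p.1 *
          (cauchyP q (r : ℂ)⁻¹ 0 p.2 / qPoch q q p.2 * t ^ p.2)‖ :=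
        mul_le_mul_of_nonneg_right (hC _) (norm_nonneg _)

lemma hasSum_sum_antidiagonal {A M : Type*} [AddMonoid A] [HasAntidiagonal A] [AddCommMonoid M]
    [TopologicalSpace M] [ContinuousAdd M] [RegularSpace M] {g : A × A → M} {a : M}
    (hg : HasSum g a) : HasSum (fun n => ∑ p ∈ antidiagonal n, g p) a :=
  (HasAntidiagonal.sigmaAntidiagonalEquivProd.hasSum_iff.mpr hg).sigma fun n =>
    Finset.hasSum (antidiagonal n) g

/-- The `(i, l)` term of the series into which the double series of the convolutions
`cauchyConv q u v x y (n + m)` with weights `s ^ n` and `t ^ m` resums. -/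
def rogersTerm (q u v x y s t : ℂ) (p : ℕ × ℕ) : ℂ :=
  cauchyP q u v p.1 / qPoch q q p.1 * s ^ p.1 * (cauchyP q x y p.2 / qPoch q q p.2 * s ^ p.2) *
    (qPochInf q (v * t * q ^ p.1) / qPochInf q (u * t) *
      (qPochInf q (y * t * q ^ (p.1 + p.2)) / qPochInf q (x * t * q ^ p.1)))

lemma summable_rogersTerm (hq : ‖q‖ < 1) {u x s : ℂ} (hus : ‖u * s‖ < 1) (hxs : ‖x * s‖ < 1)
    (v y t : ℂ) : Summable (rogersTerm q u v x y s t) := by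
  have factor_tendsto := ((tendsto_qPochInf_mul_pow hq (v * t)).div
    (tendsto_qPochInf_mul_pow hq (x * t)) one_ne_zero).div_const (qPochInf q (u * t))
  obtain ⟨A, hA⟩ := factor_tendsto.norm.bddAbove_range
  obtain ⟨B, hB⟩ := (tendsto_qPochInf_mul_pow hq (y * t)).norm.bddAbove_range
  refine .of_norm_bounded (((summable_norm_cauchyP hq hus v).mul_norm
    (summable_norm_cauchyP hq hxs y)).mul_right (A * B)) fun p => ?_
  rw [rogersTerm, norm_mul]
  refine mul_le_mul_of_nonneg_left ?_ (norm_nonneg _)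
  calc ‖qPochInf q (v * t * q ^ p.1) / qPochInf q (u * t) *
        (qPochInf q (y * t * q ^ (p.1 + p.2)) / qPochInf q (x * t * q ^ p.1))‖
      = ‖qPochInf q (v * t * q ^ p.1) / qPochInf q (x * t * q ^ p.1) / qPochInf q (u * t)‖ *
          ‖qPochInf q (y * t * q ^ (p.1 + p.2))‖ := by
        rw [← norm_mul]
        ring_nf
    _ ≤ A * B := mul_le_mul (hA (Set.mem_range_self p.1)) (hB (Set.mem_range_self (p.1 + p.2)))
        (norm_nonneg _) ((norm_nonneg _).trans (hA (Set.mem_range_self p.1)))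

lemma hasSum_cauchyConv_row (hq : ‖q‖ < 1) {u x t : ℂ} (hut : ‖u * t‖ < 1) (hxt : ‖x * t‖ < 1)
    (v y s : ℂ) (n : ℕ) :
    HasSum (fun m => cauchyConv q u v x y (n + m) * (s ^ n / qPoch q q n) * (t ^ m / qPoch q q m))
      (∑ p ∈ antidiagonal n, rogersTerm q u v x y s t p) := by
  have term_eq : ∀ p ∈ antidiagonal n, rogersTerm q u v x y s t p =
      s ^ n / qPoch q q n * (qBinom q n p.1 * (cauchyP q u v p.1 * cauchyP q x y p.2) *
        (qPochInf q (v * t * q ^ p.1) / qPochInf q (u * t) *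
          (qPochInf q (y * t * q ^ n) / qPochInf q (x * t * q ^ p.1)))) := fun p hp => by
    have hn := qPoch_self_ne_zero hq n
    rw [rogersTerm, qBinom_of_mem_antidiagonal q hp, mem_antidiagonal.mp hp,
      ← mul_assoc, ← mul_assoc (s ^ n / _), ← mul_assoc (s ^ n / _), div_mul_div_cancel₀ hn,
      ← mem_antidiagonal.mp hp, pow_add s]
    ring
  rw [sum_congr rfl term_eq, ← mul_sum]
  refine ((hasSum_cauchyConv_add hq hut hxt v y n).mul_left _).congr_fun fun m => ?_
  ring

theorem tsum_cauchyConv_add (hq : ‖q‖ < 1) {u x s t : ℂ} (hus : ‖u * s‖ < 1)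
    (hut : ‖u * t‖ < 1) (hxs : ‖x * s‖ < 1) (hxt : ‖x * t‖ < 1) (v y : ℂ) :
    ∑' p : ℕ × ℕ, cauchyConv q u v x y (p.1 + p.2) * (s ^ p.1 / qPoch q q p.1) *
      (t ^ p.2 / qPoch q q p.2) = ∑' p, rogersTerm q u v x y s t p :=
  ((summable_norm_cauchyConv_add hq hus hut hxs hxt v y).of_norm.hasSum.prod_fiberwise
    fun n => hasSum_cauchyConv_row hq hut hxt v y s n).unique
      (hasSum_sum_antidiagonal (summable_rogersTerm hq hus hxs v y t).hasSum)

lemma Ftri_mul_eq_cauchyConv (hq : q ≠ 0) (x y z : ℂ) (n : ℕ) :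
    Ftri q x y z n * (-1) ^ n * q ^ n.choose 2 = cauchyConv q 0 z y x n := by
  have signs : (-1 : ℂ) ^ n * (-1) ^ n = 1 := by rw [← mul_pow, neg_one_mul, neg_neg, one_pow]
  have powers : q ^ (-(n.choose 2 : ℤ)) * q ^ n.choose 2 = 1 := by
    rw [zpow_neg, zpow_natCast, inv_mul_cancel₀ (pow_ne_zero _ hq)]
  have prefactors_cancel (S : ℂ) :
      (-1) ^ n * q ^ (-(n.choose 2 : ℤ)) * S * (-1) ^ n * q ^ n.choose 2 = S := by
    linear_combination S * (q ^ (-(n.choose 2 : ℤ)) * q ^ n.choose 2) * signs + S * powers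
  rw [cauchyConv, Nat.sum_antidiagonal_eq_sum_range_succ fun k l =>
    qBinom q n k * (cauchyP q 0 z k * cauchyP q y x l), Ftri, prefactors_cancel]
  simp only [cauchyP_zero_left, mul_assoc]

lemma rogersTerm_zero_left (hq : ‖q‖ < 1) {x y z t ω : ℂ} (hy : y ≠ 0) (hyω : ‖y * ω‖ < 1)
    (hxω : ∀ m : ℕ, x * ω * q ^ m ≠ 1) (hzω : ∀ m : ℕ, z * ω * q ^ m ≠ 1) (j l : ℕ) :
    rogersTerm q 0 z y x t ω (j, l) =
      qPochInf q (x * ω) * qPochInf q (z * ω) / qPochInf q (y * ω) *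
        ((-1) ^ j * q ^ j.choose 2 *
          (qPoch q (y * ω) j * (z * t) ^ j /
            (qPoch q (x * ω) j * qPoch q (z * ω) j * qPoch q q j)) *
          (qPoch q (x / y) l * qPoch q 0 l / (qPoch q (x * ω * q ^ j) l * qPoch q q l) *
            (y * t) ^ l)) := by
  have qPoch_zero : qPoch q 0 l = 1 := by simp [qPoch]
  have hyj := qPoch_ne_zero (mul_pow_ne_one hq hyω) j
  rw [rogersTerm, zero_mul, qPochInf_zero, cauchyP_zero_left, cauchyP_eq_pow_mul_qPoch q hy,
    qPochInf_mul_pow hq (qPoch_ne_zero hzω j), qPochInf_mul_pow hq hyj,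
    qPochInf_mul_pow hq (qPoch_ne_zero hxω (j + l)), qPoch_add, qPoch_zero, neg_pow z]
  simp only [div_eq_mul_inv, mul_inv, inv_inv]
  ring

end Rogers

/-- Rogers formula for the trivariate q-polynomials. -/
theorem stmt7 (q : ℂ) (hq0 : q ≠ 0) (hq1 : ‖q‖ < 1) (x y z t ω : ℂ) (hy : y ≠ 0)
    (hyt : ‖y * t‖ < 1) (hyω : ‖y * ω‖ < 1)
    (hxω : ∀ m : ℕ, x * ω * q ^ m ≠ 1) (hzω : ∀ m : ℕ, z * ω * q ^ m ≠ 1) :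
    Summable (fun p : ℕ × ℕ => ‖Ftri q x y z (p.1 + p.2) * (-1) ^ (p.1 + p.2) *
        q ^ ((p.1 + p.2).choose 2) * (t ^ p.1 / qPoch q q p.1) *
        (ω ^ p.2 / qPoch q q p.2)‖) ∧
    ∑' p : ℕ × ℕ, Ftri q x y z (p.1 + p.2) * (-1) ^ (p.1 + p.2) *
        q ^ ((p.1 + p.2).choose 2) * (t ^ p.1 / qPoch q q p.1) *
        (ω ^ p.2 / qPoch q q p.2) =
      qPochInf q (x * ω) * qPochInf q (z * ω) / qPochInf q (y * ω) *
        ∑' j : ℕ, (-1) ^ j * q ^ (j.choose 2) *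
          (qPoch q (y * ω) j * (z * t) ^ j /
            (qPoch q (x * ω) j * qPoch q (z * ω) j * qPoch q q j)) *
          Phi21 q (x / y) 0 (x * ω * q ^ j) (y * t) := by
  have h0t : ‖(0 : ℂ) * t‖ < 1 := by simp
  have h0ω : ‖(0 : ℂ) * ω‖ < 1 := by simp
  simp only [Ftri_mul_eq_cauchyConv hq0]
  refine ⟨summable_norm_cauchyConv_add hq1 h0t h0ω hyt hyω z x, ?_⟩
  rw [tsum_cauchyConv_add hq1 h0t h0ω hyt hyω,
    (summable_rogersTerm hq1 h0t hyt z x ω).tsum_prod, ← tsum_mul_left]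
  simp only [rogersTerm_zero_left hq1 hy hyω hxω hzω, Phi21, tsum_mul_left]

end
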